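/- Let H be a pointed Hopf algebra of discrete corepresentation type over an algebraically closed field, let B be the link-indecomposable component of H containing 1, and suppose a ≠ b are grouplike elements such that P(1,a) and P(1,b) contain nontrivial skew primitives. Then the group G(B) of grouplikes of B is generated by a and b and admits the presentation G(B) = ⟨a, b | ab = ba, aᵐ = bⁿ⟩ for some pair of integers (m,n) ≠ ±(1,1). -/

import Mathlib

open TensorProduct



section Basic

variable (K : Type) [CommRing K] (H : Type) [AddCommGroup H] [Module K H] [Coalgebra K H]

/-- A grouplike element of a coalgebra. -/
def IsGrouplike (g : H) : Prop :=
  Coalgebra.counit (R := K) g = 1 ∧ Coalgebra.comul (R := K) g = g ⊗ₜ[K] g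

/-- The space `P(g,h)` of `(g,h)`-skew primitive elements. -/
noncomputable def skewPrim (g h : H) : Submodule K H :=
  LinearMap.ker (Coalgebra.comul (R := K) (A := H)
    - (TensorProduct.mk K H H g + (TensorProduct.mk K H H).flip h))

lemma mem_skewPrim {g h x : H} :
    x ∈ skewPrim K H g h ↔ Coalgebra.comul (R := K) x = g ⊗ₜ[K] x + x ⊗ₜ[K] h := by
  rw [skewPrim, LinearMap.mem_ker, LinearMap.sub_apply, sub_eq_zero, LinearMap.add_apply]
  rfl

/-- A submodule which is a subcoalgebra. -/
def IsSubcoalgebra (D : Submodule K H) : Prop :=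
  ∀ x ∈ D, Coalgebra.comul (R := K) x ∈ LinearMap.range (TensorProduct.map D.subtype D.subtype)

/-- A coalgebra is pointed if every simple subcoalgebra is one-dimensional. -/
def IsPointedCoalgebra : Prop :=
  ∀ D : Submodule K H, IsSubcoalgebra K H D → D ≠ ⊥ →
    (∀ D' : Submodule K H, IsSubcoalgebra K H D' → D' ≤ D → D' = ⊥ ∨ D' = D) →
    Module.finrank K ↥D = 1

end Basic

section Comodules

variable (K : Type) [CommRing K] (H : Type) [AddCommGroup H] [Module K H] [Coalgebra K H]

/-- A (finite or infinite dimensional) right `H`-comodule. -/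
structure Comod where
  carrier : Type
  [acg : AddCommGroup carrier]
  [mod : Module K carrier]
  ρ : carrier →ₗ[K] carrier ⊗[K] H
  counit_comp : ∀ m : carrier,
    (TensorProduct.rid K carrier)
      ((LinearMap.lTensor carrier (Coalgebra.counit (R := K) (A := H))) (ρ m)) = m
  coassoc : ∀ m : carrier,
    (LinearMap.lTensor carrier (Coalgebra.comul (R := K) (A := H))) (ρ m)
      = (TensorProduct.assoc K carrier H H) ((LinearMap.rTensor H ρ) (ρ m))

attribute [instance] Comod.acg Comod.mod

/-- A morphism of right `H`-comodules. -/
structure ComodHom (M N : Comod K H) where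
  toLin : M.carrier →ₗ[K] N.carrier
  compat : ∀ m : M.carrier, N.ρ (toLin m) = (LinearMap.rTensor H toLin) (M.ρ m)

/-- Isomorphism of comodules. -/
def ComodIso (M N : Comod K H) : Prop :=
  ∃ f : ComodHom K H M N, Function.Bijective f.toLin

/-- An indecomposable comodule: it is nonzero, and (equivalently to the usual definition,
since idempotents split in comodule categories) every idempotent endomorphism is `0` or `1`. -/
def Comod.Indec (M : Comod K H) : Prop :=
  (∃ m : M.carrier, m ≠ 0) ∧
    ∀ f : ComodHom K H M M, f.toLin ∘ₗ f.toLin = f.toLin →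
      f.toLin = 0 ∨ f.toLin = LinearMap.id

/-- A submodule of a comodule which is a subcomodule. -/
def IsSubcomod (M : Comod K H) (N : Submodule K M.carrier) : Prop :=
  ∀ m ∈ N, M.ρ m ∈ LinearMap.range (LinearMap.rTensor H N.subtype)

/-- The coaction of `M` factors through the subcoalgebra `D`, i.e. `M` is a `D`-comodule. -/
def CoactsThrough (M : Comod K H) (D : Submodule K H) : Prop :=
  ∀ m : M.carrier, M.ρ m ∈ LinearMap.range (LinearMap.lTensor M.carrier D.subtype)

/-- `M` has dimension vector `d` : it admits a composition series whose successive quotients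
are the one-dimensional comodules associated to grouplike elements, where for every `h` the
grouplike `h` occurs exactly `d h` times. -/
def HasDimVector (M : Comod K H) (d : H → ℕ) : Prop :=
  ∃ (k : ℕ) (F : Fin (k+1) → Submodule K M.carrier) (g : Fin k → H),
    F 0 = ⊥ ∧ F (Fin.last k) = ⊤ ∧
    (∀ i : Fin k, F i.castSucc ≤ F i.succ) ∧
    (∀ i : Fin (k+1), IsSubcomod K H M (F i)) ∧
    (∀ i : Fin k, IsGrouplike K H (g i)) ∧
    (∀ i : Fin k, ∃ m : M.carrier, m ∈ F i.succ ∧ m ∉ F i.castSucc ∧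
        F i.succ = F i.castSucc ⊔ Submodule.span K {m}) ∧
    (∀ i : Fin k, ∀ m ∈ F i.succ,
        M.ρ m - m ⊗ₜ[K] (g i) ∈ LinearMap.range (LinearMap.rTensor H (F i.castSucc).subtype)) ∧
    (∀ h : H, d h = Nat.card {i : Fin k // g i = h})

/-- A pointed coalgebra is of discrete corepresentation type if for every dimension vector `d`
there are only finitely many isomorphism classes of indecomposable comodules with
dimension vector `d`. -/
def DiscreteCorepType : Prop :=
  ∀ d : H → ℕ, ∃ (N : ℕ) (R : Fin N → Comod K H),
    ∀ M : Comod K H, M.Indec K H → HasDimVector K H M d → ∃ i, ComodIso K H M (R i)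

/-- A subcoalgebra `D ≤ H` is of finite corepresentation type: there are only finitely many
isomorphism classes of finite-dimensional indecomposable comodules whose coaction factors
through `D`. -/
def FinCorepTypeOn (D : Submodule K H) : Prop :=
  ∃ (N : ℕ) (R : Fin N → Comod K H),
    ∀ M : Comod K H, M.Indec K H → Module.Finite K M.carrier → CoactsThrough K H M D →
      ∃ i, ComodIso K H M (R i)

/-- A coalgebra is of finite corepresentation type. -/
def FinCorepType : Prop := FinCorepTypeOn K H ⊤

end Comodules

open scoped Classical

section Pointed

variable (K : Type) [CommRing K] (H : Type) [Ring H] [Bialgebra K H]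

/-- `g` is a grouplike element belonging to the subcoalgebra `B`. -/
def grouplikeIn (B : Submodule K H) (g : H) : Prop := IsGrouplike K H g ∧ g ∈ B

/-- In the Ext-quiver of the subcoalgebra `B`, there are exactly `c` arrows from the
grouplike `g` to the grouplike `h` : since the trivial skew primitive `g - h` is nonzero
precisely when `g ≠ h`, this says `dim (P(g,h) ⊓ B) = c + 1` for `g ≠ h`, and
`dim (P(g,g) ⊓ B) = c` for loops. -/
def arrowsEq (B : Submodule K H) (g h : H) (c : ℕ) : Prop :=
  Module.rank K ↥(skewPrim K H g h ⊓ B) = if g = h then (c : Cardinal) else (c : Cardinal) + 1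

/-- The number of arrows from `g` to `h` in the Ext-quiver, as a cardinal: the dimension of
the space of skew primitives modulo the trivial ones. -/
noncomputable def ntRank (g h : H) : Cardinal :=
  Module.rank K
    (↥(skewPrim K H g h) ⧸
      Submodule.comap (skewPrim K H g h).subtype (Submodule.span K {g - h}))

/-- Two grouplikes are linked in `D` if there is a nontrivial skew primitive (in either
direction) between them lying in `D`. -/
def LinkedIn (D : Submodule K H) (g h : H) : Prop :=
  ∃ x ∈ D, (x ∈ skewPrim K H g h ∨ x ∈ skewPrim K H h g) ∧ x ∉ Submodule.span K {g - h}

/-- The Ext-quiver of the subcoalgebra `D` is connected. -/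
def ConnectedOn (D : Submodule K H) : Prop :=
  ∀ g h : H, IsGrouplike K H g → g ∈ D → IsGrouplike K H h → h ∈ D →
    Relation.ReflTransGen (LinkedIn K H D) g h

/-- `B` is the link-indecomposable component containing `1` : a subcoalgebra containing `1`,
maximal with respect to its Ext-quiver being connected. -/
structure IsLIC1 (B : Submodule K H) : Prop where
  subcoalg : IsSubcoalgebra K H B
  one_mem : (1 : H) ∈ B
  connected : ConnectedOn K H B
  maximal : ∀ B' : Submodule K H, IsSubcoalgebra K H B' → ConnectedOn K H B' →
    B ≤ B' → B' = B

end Pointed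

/-- `a^i * a'^(-i)`, i.e. the `i`-th power (for `i : ℤ`) of `a` when `a'` is a two-sided
inverse of `a`. -/
def zp {B : Type} [Monoid B] (a a' : B) (i : ℤ) : B := a ^ i.toNat * a' ^ (-i).toNat

section Hopf

variable (K : Type) [CommRing K] (H : Type) [Ring H] [HopfAlgebra K H]

/-- The antipode applied to an element; for a grouplike `g` this is its inverse `g⁻¹`. -/
noncomputable def inv' (g : H) : H := HopfAlgebra.antipode (R := K) g

/-- The Ext-quiver of the subcoalgebra `B` is the (possibly folded) grid quiver `Q^{m,n}` :
the grouplikes of `B` form the group `⟨a, b | ab = ba, aᵐ = bⁿ⟩`, and at each vertex `g`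
there is exactly one arrow `g → g·a` and one arrow `g → g·b`, and no other arrows. -/
def GridQuiverOn (B : Submodule K H) (a b : H) (m n : ℤ) : Prop :=
  grouplikeIn K H B a ∧ grouplikeIn K H B b ∧ a * b = b * a ∧
  a * inv' K H a = 1 ∧ inv' K H a * a = 1 ∧ b * inv' K H b = 1 ∧ inv' K H b * b = 1 ∧
  (∀ i j : ℤ, zp a (inv' K H a) i * zp b (inv' K H b) j = 1 ↔
      ∃ l : ℤ, i = l * m ∧ j = -(l * n)) ∧
  (∀ g : H, grouplikeIn K H B g ↔
      ∃ i j : ℤ, g = zp a (inv' K H a) i * zp b (inv' K H b) j) ∧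
  (∀ g h : H, grouplikeIn K H B g → grouplikeIn K H B h →
      arrowsEq K H B g h (if h = g * a ∨ h = g * b then 1 else 0))

/-- The Ext-quiver of `B` is a single vertex, and `G(B) = {1}`. -/
def SingleVertexQuiver (B : Submodule K H) : Prop :=
  (∀ g : H, grouplikeIn K H B g ↔ g = 1) ∧ arrowsEq K H B 1 1 0

/-- The Ext-quiver of `B` is a complete oriented cycle, and `G(B) = ⟨a | aⁿ = 1⟩`. -/
def CycleQuiver (B : Submodule K H) : Prop :=
  ∃ (a : H) (nn : ℕ), 0 < nn ∧ grouplikeIn K H B a ∧ a ^ nn = 1 ∧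
    (∀ kk : ℕ, 0 < kk → kk < nn → a ^ kk ≠ 1) ∧
    (∀ g : H, grouplikeIn K H B g ↔ ∃ i : ℕ, g = a ^ i) ∧
    (∀ g h : H, grouplikeIn K H B g → grouplikeIn K H B h →
      arrowsEq K H B g h (if h = g * a then 1 else 0))

/-- The Ext-quiver of `B` is the doubly infinite linear quiver `··· → · → · → ···`, and
`G(B) = ⟨a⟩` is infinite cyclic. -/
def LineQuiver (B : Submodule K H) : Prop :=
  ∃ a : H, grouplikeIn K H B a ∧ (∀ kk : ℕ, 0 < kk → a ^ kk ≠ 1) ∧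
    (∀ g : H, grouplikeIn K H B g ↔ ∃ i j : ℕ, a ^ i * g = a ^ j) ∧
    (∀ g h : H, grouplikeIn K H B g → grouplikeIn K H B h →
      arrowsEq K H B g h (if h = g * a then 1 else 0))

end Hopf

section Helpers

open Coalgebra

variable {K : Type} [Field K] {H : Type} [AddCommGroup H] [Module K H] [Coalgebra K H]

/-- The comodule attached to a matrix of elements. -/
noncomputable abbrev matComod {ι : Type} [Fintype ι] [DecidableEq ι] (C : ι → ι → H)
    (he : ∀ p q, counit (R := K) (C p q) = if p = q then 1 else 0)
    (hd : ∀ p q, comul (R := K) (C p q) = ∑ k, C p k ⊗ₜ[K] C k q) : Comod K H where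
  carrier := ι →₀ K
  ρ := Finsupp.linearCombination K (fun q => ∑ p, Finsupp.single p (1 : K) ⊗ₜ[K] C p q)
  counit_comp := by
    intro m
    induction m using Finsupp.induction_linear with
    | zero => simp
    | add f g hf hg => simp only [map_add, hf, hg]
    | single i r => simp [Finsupp.linearCombination_single, map_sum, he, ite_smul]
  coassoc := by
    intro m
    induction m using Finsupp.induction_linear with
    | zero => simp
    | add f g hf hg => simp only [map_add, hf, hg]
    | single i r =>
      simp only [Finsupp.linearCombination_single, map_smul, map_sum, LinearMap.lTensor_tmul, hd,
        LinearMap.rTensor_tmul, one_smul, TensorProduct.tmul_sum, TensorProduct.sum_tmul,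
        TensorProduct.assoc_tmul]
      rw [Finset.sum_comm]

/-- coordinate on the first tensor factor. -/
noncomputable def crd {ι : Type} (p : ι) : (ι →₀ K) ⊗[K] H →ₗ[K] H :=
  (TensorProduct.lid K H).toLinearMap ∘ₗ LinearMap.rTensor H (Finsupp.lapply p)

lemma crd_tmul {ι : Type} (p : ι) (m : ι →₀ K) (h : H) : crd p (m ⊗ₜ[K] h) = m p • h := by
  simp [crd]

lemma hom_eq {ι : Type} [Fintype ι] [DecidableEq ι] {C C' : ι → ι → H} {he hd he' hd'}
    (f : ComodHom K H (matComod C he hd) (matComod C' he' hd')) (p j : ι) :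
    ∑ q, (f.toLin (Finsupp.single j 1)) q • C' p q
      = ∑ q, (f.toLin (Finsupp.single q 1)) p • C q j := by
  have h := f.compat (Finsupp.single j 1)
  have h2 := congrArg (crd p) h
  simp only [Finsupp.linearCombination_single, one_smul, map_sum, LinearMap.rTensor_tmul,
    crd_tmul] at h2
  rw [← h2, Finsupp.linearCombination_apply, Finsupp.sum_fintype _ _ (by simp)]
  simp [map_sum, crd_tmul, Finsupp.single_apply, ite_smul]

lemma matComod_dimVector {ι : Type} [Fintype ι] [DecidableEq ι] (C : ι → ι → H) {he hd}
    {k : ℕ} (e : ι ≃ Fin k) (htri : ∀ p q, e q < e p → C p q = 0) 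
    (hgl : ∀ p, IsGrouplike K H (C p p)) :
    HasDimVector K H (matComod C he hd)
      (fun h => Nat.card {i : Fin k // C (e.symm i) (e.symm i) = h}) := by
  let F : ℕ → Submodule K (ι →₀ K) := fun i => Finsupp.supported K K {p | (e p : ℕ) < i}
  have hmemF : ∀ (i : ℕ) (p : ι), (e p : ℕ) < i → Finsupp.single p (1 : K) ∈ F i := by
    intro i p hp
    exact Finsupp.single_mem_supported K _ hp
  have hspan : ∀ i, F i = Submodule.span K ((fun p => Finsupp.single p (1 : K)) '' {p | (e p : ℕ) < i}) := 
    fun i => Finsupp.supported_eq_span_single K _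
  have hmono : ∀ i, F i ≤ F (i+1) := fun i => 
    Finsupp.supported_mono (fun p hp => by simp only [Set.mem_ofPred_eq] at *; omega)
  have htm : ∀ (i : ℕ) (m : ι →₀ K) (h : H), m ∈ F i → 
      m ⊗ₜ[K] h ∈ LinearMap.range (LinearMap.rTensor H (F i).subtype) := by
    intro i m h hm
    exact ⟨(⟨m, hm⟩ : F i) ⊗ₜ h, by simp⟩
  have hsub : ∀ i, IsSubcomod K H (matComod C he hd) (F i) := by
    intro i m hm
    change m ∈ F i at hm
    rw [hspan] at hm
    induction hm using Submodule.span_induction with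
    | zero => simp
    | add x y _ _ hx hy => rw [map_add]; exact Submodule.add_mem _ hx hy
    | smul c x _ hx => rw [map_smul]; exact Submodule.smul_mem _ _ hx
    | mem x hx =>
      obtain ⟨p, hp, rfl⟩ := hx
      simp only [Finsupp.linearCombination_single, one_smul]
      refine Submodule.sum_mem _ fun q _ => ?_
      by_cases hq : e p < e q
      · rw [htri q p hq]; simp
      · refine htm i _ _ (hmemF i q ?_)
        simp only [Set.mem_ofPred_eq] at hp
        have : (e q : ℕ) ≤ e p := by simpa using hq
        omega
  have hsucc : ∀ i : Fin k, F (i+1) = F i ⊔ Submodule.span K {Finsupp.single (e.symm i) (1:K)} := by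
    intro i
    rw [hspan, hspan, ← Submodule.span_union]
    congr 1
    have : {p | (e p : ℕ) < (i : ℕ) + 1} = {p | (e p : ℕ) < (i : ℕ)} ∪ {e.symm i} := by
      ext p
      simp only [Set.mem_ofPred_eq, Set.mem_union, Set.mem_singleton_iff, Equiv.eq_symm_apply, Fin.ext_iff]
      omega
    rw [this, Set.image_union, Set.image_singleton]
  refine ⟨k, fun i => F i, fun i => C (e.symm i) (e.symm i), ?_, ?_, ?_, fun i => hsub i, fun i => hgl _, ?_, ?_, fun h => rfl⟩
  · simp [F, Finsupp.supported_empty]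
  · have : {p | (e p : ℕ) < k} = Set.univ := by ext p; simp
    simp [F, Finsupp.supported_univ]
  · intro i; exact hmono i
  · intro i
    refine ⟨Finsupp.single (e.symm i) 1, hmemF _ _ (by simp), ?_, hsucc i⟩
    intro hm
    have := (Finsupp.mem_supported' K _).1 hm (e.symm i) (by simp)
    simp at this
  · intro i m hm
    change m ∈ F (i+1) at hm
    rw [hsucc, Submodule.mem_sup] at hm
    obtain ⟨m', hm', z, hz, rfl⟩ := hm
    obtain ⟨c, rfl⟩ := Submodule.mem_span_singleton.1 hz
    rw [map_add, TensorProduct.add_tmul, add_sub_add_comm]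
    refine Submodule.add_mem _ (Submodule.sub_mem _ (hsub i m' hm') (htm i _ _ hm')) ?_
    rw [map_smul, ← TensorProduct.smul_tmul', ← smul_sub]
    refine Submodule.smul_mem _ _ ?_
    simp only [Finsupp.linearCombination_single, one_smul]
    rw [← Finset.sum_erase_add _ _ (Finset.mem_univ (e.symm i)), add_sub_cancel_right]
    refine Submodule.sum_mem _ fun q hq => ?_
    by_cases h : i < e q
    · rw [htri q _ (by simpa using h)]; simp
    · refine htm i _ _ (hmemF i q ?_)
      have h1 : e q ≠ i := by
        rintro rfl
        simp at hq
      have h2 : (e q : ℕ) ≠ i := fun h => h1 (Fin.ext h)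
      have : (e q : ℕ) ≤ i := by simpa using h
      omega

end Helpers
section Cycle

open Coalgebra

variable {K : Type} [Field K] {H : Type} [AddCommGroup H] [Module K H] [Coalgebra K H]

lemma counit_skew {g h x : H} (hg : IsGrouplike K H g) (hh : IsGrouplike K H h)
    (hx : x ∈ skewPrim K H g h) : counit (R := K) x = 0 := by
  rw [mem_skewPrim] at hx
  have h1 := congrArg (fun t => TensorProduct.lid K K (TensorProduct.map (counit (R := K)) (counit (R := K)) t)) hx
  have h2 := Coalgebra.rTensor_counit_comul (R := K) x
  have h3 := congrArg (fun t => TensorProduct.lid K K (LinearMap.lTensor K (counit (R := K)) t)) h2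
  rw [← LinearMap.comp_apply (LinearMap.lTensor _ _) (LinearMap.rTensor _ _), LinearMap.lTensor_comp_rTensor] at h3
  simp only [LinearMap.lTensor_tmul, TensorProduct.lid_tmul, one_smul] at h3
  simp only [map_add, TensorProduct.map_tmul, TensorProduct.lid_tmul, hg.1, hh.1, smul_eq_mul, mul_one] at h1
  rw [h3] at h1
  simpa using h1

/-- bipartite matrix. -/
def bipC {ι : Type} [DecidableEq ι] (g h : ι → H) (W : ι → ι → H) : ι ⊕ ι → ι ⊕ ι → H
  | .inl i, .inl j => if i = j then g i else 0
  | .inl i, .inr j => W i j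
  | .inr _, .inl _ => 0
  | .inr i, .inr j => if i = j then h i else 0

lemma bipC_counit {ι : Type} [DecidableEq ι] {g h : ι → H} {W : ι → ι → H}
    (hg : ∀ i, IsGrouplike K H (g i)) (hh : ∀ i, IsGrouplike K H (h i))
    (hW : ∀ i j, W i j ∈ skewPrim K H (g i) (h j)) (p q : ι ⊕ ι) :
    counit (R := K) (bipC g h W p q) = if p = q then 1 else 0 := by
  rcases p with i | i <;> rcases q with j | j <;> simp only [bipC]
  · by_cases e : i = j <;> simp [e, (hg _).1]
  · simp [counit_skew (hg i) (hh j) (hW i j)]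
  · simp
  · by_cases e : i = j <;> simp [e, (hh _).1]

lemma bipC_comul {ι : Type} [Fintype ι] [DecidableEq ι] {g h : ι → H} {W : ι → ι → H}
    (hg : ∀ i, IsGrouplike K H (g i)) (hh : ∀ i, IsGrouplike K H (h i))
    (hW : ∀ i j, W i j ∈ skewPrim K H (g i) (h j)) (p q : ι ⊕ ι) :
    comul (R := K) (bipC g h W p q) = ∑ k, bipC g h W p k ⊗ₜ[K] bipC g h W k q := by
  rw [Fintype.sum_sum_type]
  rcases p with i | i <;> rcases q with j | j <;> simp only [bipC]
  · by_cases e : i = j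
    · subst e
      simp [(hg _).2, TensorProduct.ite_tmul]
    · simp [e, TensorProduct.ite_tmul]
  · rw [(mem_skewPrim K H).1 (hW i j)]
    simp [TensorProduct.ite_tmul, TensorProduct.tmul_ite]
  · simp
  · by_cases e : i = j
    · subst e
      simp [(hh _).2, TensorProduct.ite_tmul]
    · simp [e, TensorProduct.ite_tmul]

/-- the coefficients of the cycle. -/
def cyW {n : ℕ} (x y : Fin (n+2) → H) (t : K) (i j : Fin (n+2)) : H :=
  if i = j then x j else if i = j + 1 then (if j = 0 then t else 1) • y j else 0

lemma cyW_mem {n : ℕ} {g h x y : Fin (n+2) → H}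
    (hx : ∀ i, x i ∈ skewPrim K H (g i) (h i)) (hy : ∀ i, y i ∈ skewPrim K H (g (i+1)) (h i))
    (t : K) (i j : Fin (n+2)) : cyW x y t i j ∈ skewPrim K H (g i) (h j) := by
  unfold cyW
  split_ifs with h1 h2
  · subst h1; exact hx _
  · subst h2; exact Submodule.smul_mem _ _ (hy _)
  · subst h2; exact Submodule.smul_mem _ _ (hy _)
  · exact Submodule.zero_mem _

lemma span_aux {u v z : H} (hz : z ∉ Submodule.span K {u - v}) {α β γ : K}
    (h : α • u + β • z = γ • z + α • v) : β = γ := by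
  by_contra hne
  apply hz
  have h1 : (γ - β) • z = α • (u - v) := by
    rw [sub_smul, smul_sub, sub_eq_sub_iff_add_eq_add, ← h, add_comm]
  rw [Submodule.mem_span_singleton]
  refine ⟨(γ - β)⁻¹ * α, ?_⟩
  rw [mul_smul, ← h1, smul_smul, inv_mul_cancel₀ (sub_ne_zero.2 (Ne.symm hne)), one_smul]

lemma gl_smul_eq {u v : H} {c : K} (hne : u ≠ v) (h : c • u = c • v) :
    c = 0 := by
  by_contra hc
  exact hne (smul_right_injective H hc h)

lemma one_ne_fin {n : ℕ} (k : Fin (n+2)) : k + 1 ≠ k := by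
  intro h
  have : (1 : Fin (n+2)) = 0 := by simpa using h
  exact absurd this (by simp)

lemma const_aux {n : ℕ} (s : Fin (n+2) → K) (hs : ∀ k, k ≠ 0 → s (k+1) = s k) : ∀ j, s j = s 0 := by
  have hsucc : ∀ t : ℕ, Fin.ofNat (n+2) (t+1) = Fin.ofNat (n+2) t + 1 := by
    intro t
    apply Fin.ext
    simp [Fin.val_add]
  have h1 : ∀ t : ℕ, t + 1 ≤ n + 2 → s (Fin.ofNat (n+2) (t+1)) = s 1 := by
    intro t
    induction t with
    | zero => intro _; rfl
    | succ t ih =>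
      intro ht
      rw [hsucc (t+1), hs, ih (by omega)]
      intro h0
      have := congrArg Fin.val h0
      rw [Fin.val_ofNat, Nat.mod_eq_of_lt (by omega)] at this
      simp at this
  have h0 : s 0 = s 1 := by
    have := h1 (n+1) le_rfl
    rwa [show Fin.ofNat (n+2) (n + 1 + 1) = 0 from by
      apply Fin.ext; simp [Fin.val_ofNat]] at this
  intro j
  rcases Nat.eq_zero_or_pos j.val with h | h
  · rw [show j = 0 from Fin.ext h]
  · rw [h0, ← h1 (j.val - 1) (by omega), Nat.sub_add_cancel h]
    congr 1
    apply Fin.ext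
    simp [Nat.mod_eq_of_lt j.isLt]

lemma cycle_hom {n : ℕ} {g h x y : Fin (n+2) → H}
    (hgi : Function.Injective g) (hhi : Function.Injective h)
    (hg : ∀ i, IsGrouplike K H (g i)) (hh : ∀ i, IsGrouplike K H (h i))
    (hx' : ∀ i, x i ∉ Submodule.span K {g i - h i})
    (hy' : ∀ i, y i ∉ Submodule.span K {g (i+1) - h i})
    (t t' : K) {he hd he' hd'}
    (f : ComodHom K H (matComod (bipC g h (cyW x y t)) he hd)
      (matComod (bipC g h (cyW x y t')) he' hd')) :
    ∃ s : K, (∀ i, f.toLin (Finsupp.single (.inl i) 1) = Finsupp.single (.inl i) s) ∧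
      (∀ i j, f.toLin (Finsupp.single (.inr j) 1) (.inr i) = if i = j then s else 0) ∧
      (s ≠ 0 → t = t') := by
  set F : (Fin (n+2) ⊕ Fin (n+2)) → (Fin (n+2) ⊕ Fin (n+2)) → K :=
    fun p q => f.toLin (Finsupp.single q 1) p with hF
  have E : ∀ p j, ∑ q, F q j • bipC g h (cyW x y t') p q = ∑ q, F p q • bipC g h (cyW x y t) q j :=
    fun p j => hom_eq f p j
  simp only [Fintype.sum_sum_type] at E
  have E1 : ∀ i k, F (.inr i) (.inl k) • h i = F (.inr i) (.inl k) • g k := by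
    intro i k
    simpa [bipC] using E (.inr i) (.inl k)
  have E2 : ∀ i k, F (.inl i) (.inl k) • g i + ∑ l, F (.inr l) (.inl k) • cyW x y t' i l
      = F (.inl i) (.inl k) • g k := by
    intro i k
    simpa [bipC] using E (.inl i) (.inl k)
  have A : ∀ l k, F (.inr l) (.inl k) = 0 := by
    intro l k
    by_contra hne
    have h1 : h l = g k := smul_right_injective H hne (E1 l k)
    have h2 := E2 l k
    rw [Finset.sum_eq_single l] at h2
    · rw [← h1] at h2
      refine hne (span_aux (hx' l) (γ := 0) (α := F (.inl l) (.inl k)) ?_)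
      rw [zero_smul, zero_add, ← h2]
      simp [cyW]
    · intro l' _ hl'
      rw [gl_smul_eq (fun e => hl' (hhi (e.trans h1.symm))) (E1 l' k), zero_smul]
    · simp
  have B : ∀ i k, i ≠ k → F (.inl i) (.inl k) = 0 := by
    intro i k hik
    refine gl_smul_eq (hgi.ne hik) ?_
    simpa [A] using E2 i k
  have C : ∀ i k, i ≠ k → F (.inr i) (.inr k) = 0 := by
    intro i k hik
    refine gl_smul_eq (hhi.ne hik) ?_
    simpa [bipC, A] using E (.inr i) (.inr k)
  have D : ∀ i k, F (.inl i) (.inr k) • g i + F (.inr k) (.inr k) • cyW x y t' i k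
      = F (.inl i) (.inl i) • cyW x y t i k + F (.inl i) (.inr k) • h k := by
    intro i k
    have h1 := E (.inl i) (.inr k)
    rw [Finset.sum_eq_single i, Finset.sum_eq_single k, Finset.sum_eq_single i, Finset.sum_eq_single k] at h1
    · simpa [bipC] using h1
    all_goals simp +contextual [bipC]
    · intro l hl; rw [B i l (Ne.symm hl)]; simp
    · intro l hl; rw [C l k hl]; simp
    · intro l hl e; exact absurd e.symm hl
  have D1 : ∀ k, F (.inr k) (.inr k) = F (.inl k) (.inl k) := by
    intro k
    refine span_aux (hx' k) (α := F (.inl k) (.inr k)) ?_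
    simpa [cyW] using D k k
  have D2 : ∀ k, F (.inr k) (.inr k) * (if k = 0 then t' else 1)
      = F (.inl (k+1)) (.inl (k+1)) * (if k = 0 then t else 1) := by
    intro k
    refine span_aux (hy' k) (α := F (.inl (k+1)) (.inr k)) ?_
    have := D (k+1) k
    simp only [cyW, if_neg (one_ne_fin k), if_true] at this
    simpa only [mul_smul] using this
  have hc := const_aux (fun k => F (.inl k) (.inl k)) (by
    intro k hk
    have := D2 k
    simp only [if_neg hk, mul_one, D1] at this
    exact this.symm)
  refine ⟨F (.inl 0) (.inl 0), ?_, ?_, ?_⟩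
  · intro i
    ext p
    rcases p with p | p
    · by_cases hp : p = i
      · subst hp; simpa using hc p
      · have := B p i hp
        simp only [hF] at this
        rw [this, Finsupp.single_eq_of_ne (by simpa using hp)]
    · have := A p i
      simp only [hF] at this
      rw [this]; simp
  · intro i j
    split_ifs with hij
    · subst hij
      exact (D1 i).trans (hc i)
    · exact C i j hij
  · intro hs
    have h1 := D2 0
    have h2 := hc 1
    simp only [if_true, D1, zero_add] at h1
    rw [h2] at h1
    exact (mul_left_cancel₀ hs h1).symm

lemma comod_comp {M M' R : Comod K H} (h1 : ComodIso K H M R) (h2 : ComodIso K H M' R) :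
    ∃ f : ComodHom K H M M', Function.Injective f.toLin := by
  obtain ⟨f1, hf1⟩ := h1
  obtain ⟨f2, hf2⟩ := h2
  let e := LinearEquiv.ofBijective f2.toLin hf2
  have he : f2.toLin = e.toLinearMap := by ext; rfl
  refine ⟨⟨e.symm.toLinearMap ∘ₗ f1.toLin, ?_⟩, ?_⟩
  · intro m
    have h3 := f2.compat (e.symm (f1.toLin m))
    have h4 : f2.toLin (e.symm (f1.toLin m)) = f1.toLin m := e.apply_symm_apply _
    rw [h4, f1.compat] at h3
    rw [LinearMap.rTensor_comp, LinearMap.comp_apply (LinearMap.rTensor H _), h3, he, ← LinearMap.comp_apply (LinearMap.rTensor H _) (LinearMap.rTensor H _),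
      ← LinearMap.rTensor_comp]
    simp
  · exact e.symm.injective.comp hf1.1

theorem cycle_lemma [Infinite K] (hdisc : DiscreteCorepType K H) {n : ℕ} {g h x y : Fin (n+2) → H}
    (hgi : Function.Injective g) (hhi : Function.Injective h)
    (hg : ∀ i, IsGrouplike K H (g i)) (hh : ∀ i, IsGrouplike K H (h i))
    (hx : ∀ i, x i ∈ skewPrim K H (g i) (h i))
    (hx' : ∀ i, x i ∉ Submodule.span K {g i - h i})
    (hy : ∀ i, y i ∈ skewPrim K H (g (i+1)) (h i))
    (hy' : ∀ i, y i ∉ Submodule.span K {g (i+1) - h i}) : False := by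
  let M : K → Comod K H := fun t => matComod (bipC g h (cyW x y t))
    (bipC_counit hg hh (cyW_mem hx hy t)) (bipC_comul hg hh (cyW_mem hx hy t))
  have hind : ∀ t, (M t).Indec K H := by
    intro t
    refine ⟨⟨Finsupp.single (.inl 0) 1, ?_⟩, ?_⟩
    · exact (Finsupp.single_ne_zero).2 one_ne_zero
    · intro f hf
      obtain ⟨s, h1, h2, -⟩ := cycle_hom hgi hhi hg hh hx' hy' t t f
      have hff : ∀ m, f.toLin (f.toLin m) = f.toLin m := fun m => LinearMap.congr_fun hf m
      have hs : s * s = s := by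
        have h5 : (Finsupp.single (Sum.inl 0) s : (Fin (n+2) ⊕ Fin (n+2)) →₀ K)
            = s • Finsupp.single (Sum.inl 0) 1 := by simp
        have h6 := hff (Finsupp.single (.inl 0) 1)
        rw [h1, h5, map_smul, h1] at h6
        have h7 : s • (Finsupp.single (Sum.inl 0) s : (Fin (n+2) ⊕ Fin (n+2)) →₀ K)
            = s • Finsupp.single (Sum.inl 0) 1 := h6
        have h4 := congrArg (fun m : (Fin (n+2) ⊕ Fin (n+2)) →₀ K => m (.inl 0)) h7
        simp only [Finsupp.smul_apply, smul_eq_mul, mul_one, Finsupp.single_eq_same] at h4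
        exact h4
      -- f v = s v for v in the lower part
      have hlow : ∀ m : (Fin (n+2) ⊕ Fin (n+2)) →₀ K, (∀ i, m (.inr i) = 0) → f.toLin m = s • m := by
        intro m hm
        have e : m = ∑ i, m (.inl i) • Finsupp.single (.inl i) (1 : K) := by
          ext p
          rcases p with p | p
          · simp [Finsupp.finsetSum_apply, Finsupp.single_apply]
          · simp [Finsupp.finsetSum_apply, hm]
        rw [e, map_sum, Finset.smul_sum]
        refine Finset.sum_congr rfl fun i _ => ?_
        rw [map_smul, h1, smul_comm, Finsupp.smul_single s, smul_eq_mul, mul_one]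
      have hup : ∀ j, f.toLin (Finsupp.single (.inr j) (1 : K)) = s • Finsupp.single (.inr j) (1 : K) := by
        intro j
        set u : (Fin (n+2) ⊕ Fin (n+2)) →₀ K := Finsupp.single (.inr j) (1 : K) with hu
        have h3 : f.toLin (f.toLin u - s • u) = s • (f.toLin u - s • u) := by
          apply hlow
          intro i
          rw [Finsupp.sub_apply, h2, Finsupp.smul_apply, hu, Finsupp.single_apply]
          by_cases e : i = j
          · simp [e]
          · simp [e, Ne.symm e]
        rw [map_sub, hff, map_smul, smul_sub, smul_smul, hs] at h3
        rcases IsIdempotentElem.iff_eq_zero_or_one.1 hs with h0 | h0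
        · simpa [h0] using h3
        · rw [h0] at h3 ⊢
          simp only [one_smul, sub_self] at h3 ⊢
          exact (sub_eq_zero.1 h3.symm)
      have hall : f.toLin = s • LinearMap.id := by
        apply Finsupp.lhom_ext'
        intro p
        ext
        rcases p with p | p
        · simp [h1]
        · simpa using congrArg (fun m : (Fin (n+2) ⊕ Fin (n+2)) →₀ K => m _) (hup p)
      rcases IsIdempotentElem.iff_eq_zero_or_one.1 hs with h0 | h0
      · left; rw [hall, h0, zero_smul]
      · right; rw [hall, h0, one_smul]
  have hdim : ∀ t, HasDimVector K H (M t) (fun z => Nat.card {i : Fin (n+2+(n+2)) // 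
      Sum.elim g h (finSumFinEquiv.symm i) = z}) := by
    intro t
    have := matComod_dimVector (K := K) (bipC g h (cyW x y t))
      (he := bipC_counit hg hh (cyW_mem hx hy t)) (hd := bipC_comul hg hh (cyW_mem hx hy t))
      finSumFinEquiv ?_ ?_
    · have e : ∀ p, bipC g h (cyW x y t) p p = Sum.elim g h p := by
        rintro (p | p) <;> simp [bipC]
      simp only [e] at this
      exact this
    · rintro (p | p) (q | q) hpq
      · have : p ≠ q := by rintro rfl; simp at hpq
        simp [bipC, this]
      · exfalso
        simp [Fin.lt_def] at hpq
        omega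
      · simp [bipC]
      · have : p ≠ q := by rintro rfl; simp at hpq
        simp [bipC, this]
    · rintro (p | p)
      · simpa [bipC] using hg p
      · simpa [bipC] using hh p
  obtain ⟨N, R, hR⟩ := hdisc _
  choose φ hφ using fun t => hR (M t) (hind t) (hdim t)
  obtain ⟨t, t', hne, htt⟩ := Finite.exists_ne_map_eq_of_infinite φ
  obtain ⟨f, hf⟩ := comod_comp (hφ t) (htt ▸ hφ t')
  obtain ⟨s, h1, -, h3⟩ := cycle_hom hgi hhi hg hh hx' hy' t t' f
  have hs : s = 0 := by
    by_contra h
    exact hne (h3 h)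
  have h4 := h1 0
  rw [hs, Finsupp.single_zero] at h4
  have h5 : (Finsupp.single (Sum.inl 0) (1 : K) : (Fin (n+2) ⊕ Fin (n+2)) →₀ K) = 0 :=
    hf (h4.trans (map_zero f.toLin).symm)
  exact (Finsupp.single_ne_zero.2 one_ne_zero) h5

end Cycle
section GroupPart

open Coalgebra

variable {K : Type} [Field K] {H : Type} [Ring H] [HopfAlgebra K H]

lemma isGL_iff {g : H} : IsGrouplike K H g ↔ IsGroupLikeElem K g :=
  ⟨fun h => ⟨h.1, h.2⟩, fun h => ⟨h.1, h.2⟩⟩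

lemma isGL_val (g : GroupLike K H) : IsGrouplike K H g.val := isGL_iff.2 g.2

/-- there is a nontrivial skew primitive. -/
def Lnk (g h : GroupLike K H) : Prop :=
  ∃ x ∈ skewPrim K H g.val h.val, x ∉ Submodule.span K {g.val - h.val}

lemma Lnk.mul_left {g h : GroupLike K H} (k : GroupLike K H) (l : Lnk g h) :
    Lnk (k * g) (k * h) := by
  obtain ⟨x, hx, hx'⟩ := l
  refine ⟨k.val * x, ?_, ?_⟩
  · rw [mem_skewPrim] at *
    simp [hx, mul_add]
  · intro h1
    apply hx'
    rw [Submodule.mem_span_singleton] at *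
    obtain ⟨c, hc⟩ := h1
    refine ⟨c, ?_⟩
    have := congrArg (fun t => (k⁻¹).val * t) hc
    simp only [GroupLike.val_mul, ← mul_sub, mul_smul_comm, ← mul_assoc] at this
    rw [← GroupLike.val_mul, inv_mul_cancel, GroupLike.val_one, one_mul, one_mul] at this
    exact this

lemma Lnk.mul_right {g h : GroupLike K H} (k : GroupLike K H) (l : Lnk g h) :
    Lnk (g * k) (h * k) := by
  obtain ⟨x, hx, hx'⟩ := l
  refine ⟨x * k.val, ?_, ?_⟩
  · rw [mem_skewPrim] at *
    simp [hx, add_mul]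
  · intro h1
    apply hx'
    rw [Submodule.mem_span_singleton] at *
    obtain ⟨c, hc⟩ := h1
    refine ⟨c, ?_⟩
    have := congrArg (fun t => t * (k⁻¹).val) hc
    simp only [GroupLike.val_mul, ← sub_mul, smul_mul_assoc, mul_assoc] at this
    rw [← GroupLike.val_mul, mul_inv_cancel, GroupLike.val_one, mul_one, mul_one] at this
    exact this

lemma Lnk.of_eq {g h c : GroupLike K H} (l : Lnk 1 c) (e : g * c = h) : Lnk g h := by
  have := l.mul_left g
  rwa [mul_one, e] at this

lemma Lnk.one {g h : GroupLike K H} (l : Lnk g h) : Lnk 1 (g⁻¹ * h) := by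
  have := l.mul_left g⁻¹
  rwa [inv_mul_cancel] at this

lemma Lnk.conj {c : GroupLike K H} (k : GroupLike K H) (l : Lnk 1 c) : Lnk 1 (k * c * k⁻¹) := by
  have := (l.mul_left k).mul_right k⁻¹
  simpa using this

lemma cycleG [Infinite K] (hdisc : DiscreteCorepType K H) {n : ℕ} (g h : Fin (n+2) → GroupLike K H)
    (hg : Function.Injective g) (hh : Function.Injective h)
    (h1 : ∀ i, Lnk (g i) (h i)) (h2 : ∀ i, Lnk (g (i+1)) (h i)) : False := by
  choose x hx hx' using h1
  choose y hy hy' using h2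
  exact cycle_lemma (g := fun i => (g i).val) (h := fun i => (h i).val) hdisc
    (GroupLike.val_injective.comp hg) (GroupLike.val_injective.comp hh)
    (fun i => isGL_val _) (fun i => isGL_val _) hx hx' hy hy'

lemma lnk_comm [Infinite K] (hdisc : DiscreteCorepType K H) {a b : GroupLike K H} (hab : a ≠ b)
    (ha : Lnk 1 a) (hb : Lnk 1 b) : a * b = b * a := by
  by_contra hne
  refine cycleG hdisc (n := 0) ![1, a*b*a⁻¹*b⁻¹] ![a, a*b*a⁻¹] ?_ ?_ ?_ ?_
  · have : a*b*a⁻¹*b⁻¹ ≠ 1 := by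
      intro h
      apply hne
      rwa [mul_inv_eq_one, mul_inv_eq_iff_eq_mul] at h
    intro i j
    fin_cases i <;> fin_cases j <;> simp [this, this.symm]
  · have : a*b*a⁻¹ ≠ a := by
      intro h
      rw [mul_inv_eq_iff_eq_mul] at h
      exact hab (mul_left_cancel h).symm
    intro i j
    fin_cases i <;> fin_cases j <;> simp [this, this.symm]
  · intro i
    fin_cases i
    · exact ha
    · exact hb.of_eq (by simp)
  · intro i
    fin_cases i
    · exact (ha.conj b).of_eq (by simp [mul_assoc])
    · exact hb.conj a

lemma lnk_three [Infinite K] (hdisc : DiscreteCorepType K H) {a b c : GroupLike K H} (hab : a ≠ b)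
    (ha : Lnk 1 a) (hb : Lnk 1 b) (hc : Lnk 1 c) : c = a ∨ c = b := by
  by_contra! hne
  obtain ⟨hca, hcb⟩ := hne
  have cac := lnk_comm hdisc hca hc ha
  have cbc := lnk_comm hdisc hcb hc hb
  have cab := lnk_comm hdisc hab ha hb
  refine cycleG hdisc (n := 1) ![1, a*b⁻¹, c*b⁻¹] ![a, c * (a * b⁻¹), c] ?_ ?_ ?_ ?_
  · have h1 : a*b⁻¹ ≠ 1 := by rwa [Ne, mul_inv_eq_one]
    have h2 : c*b⁻¹ ≠ 1 := by rwa [Ne, mul_inv_eq_one]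
    have h3 : a*b⁻¹ ≠ c * b⁻¹ := by simpa using hca.symm
    intro i j
    fin_cases i <;> fin_cases j <;> simp [h1, h1.symm, h2, h2.symm, hca, hca.symm]
  · have h1 : c * (a * b⁻¹) ≠ a := by
      rw [← mul_assoc, Ne, mul_inv_eq_iff_eq_mul, cac]
      simpa using hcb
    have h2 : c * (a * b⁻¹) ≠ c := by simpa [mul_inv_eq_one] using hab
    intro i j
    fin_cases i <;> fin_cases j <;> simp [h1, h1.symm, h2, h2.symm, hca, hca.symm]
  · intro i
    fin_cases i
    · exact ha
    · refine hc.of_eq ?_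
      change a * b⁻¹ * c = c * (a * b⁻¹)
      have : b⁻¹ * c = c * b⁻¹ := (Commute.inv_right cbc).symm
      rw [mul_assoc, this, ← mul_assoc, ← cac, mul_assoc]
    · exact hb.of_eq (by simp)
  · intro i
    fin_cases i
    · exact hb.of_eq (by simp)
    · refine ha.of_eq ?_
      change c * b⁻¹ * a = c * (a * b⁻¹)
      have : a * b⁻¹ = b⁻¹ * a := (Commute.inv_right cab)
      rw [mul_assoc, this]
    · exact hc

lemma lnk_order [Infinite K] (hdisc : DiscreteCorepType K H) {a b : GroupLike K H} (hab : a ≠ b)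
    (ha : Lnk 1 a) (hb : Lnk 1 b) : ¬ IsOfFinOrder (a * b⁻¹) := by
  intro hfin
  have h0 := hfin.orderOf_pos
  have h1 : orderOf (a * b⁻¹) ≠ 1 := by
    rwa [Ne, orderOf_eq_one_iff, mul_inv_eq_one]
  obtain ⟨n, hn⟩ : ∃ n, orderOf (a * b⁻¹) = n + 2 := ⟨orderOf (a * b⁻¹) - 2, by omega⟩
  have hinj : Function.Injective (fun i : Fin (n+2) => (a * b⁻¹) ^ i.val) := by
    intro i j hij
    simp only [pow_inj_mod, hn, Nat.mod_eq_of_lt i.isLt, Nat.mod_eq_of_lt j.isLt] at hij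
    exact Fin.ext hij
  refine cycleG hdisc (n := n) (fun i => (a * b⁻¹) ^ i.val) (fun i => (a * b⁻¹) ^ i.val * a) 
    hinj ?_ ?_ ?_
  · intro i j hij
    exact hinj (mul_right_cancel hij)
  · intro i
    exact ha.of_eq rfl
  · intro i
    refine hb.of_eq ?_
    have : (a * b⁻¹) ^ (i+1).val = (a * b⁻¹) ^ (i.val + 1) := by
      rw [pow_inj_mod, hn, Fin.val_add]
      simp
    simp only [this, pow_succ]
    simp [mul_assoc]

lemma rel_cyclic {G : Type} [Group G] {a b : G} (hab : a ≠ b) (hc : a * b = b * a)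
    (ho : ¬ IsOfFinOrder (a * b⁻¹)) : ∃ m n : ℤ, ((m, n) : ℤ × ℤ) ≠ (1, 1) ∧
      ((m, n) : ℤ × ℤ) ≠ (-1, -1) ∧
      ∀ i j : ℤ, a ^ i * b ^ j = 1 ↔ ∃ l : ℤ, i = l * m ∧ j = -(l * n) := by
  have hcm : Commute a b := hc
  let R : AddSubgroup ℤ :=
    { carrier := {s | ∃ i j : ℤ, s = i + j ∧ a ^ i * b ^ j = 1}
      zero_mem' := ⟨0, 0, by simp, by simp⟩
      add_mem' := by
        rintro _ _ ⟨i, j, rfl, h⟩ ⟨i', j', rfl, h'⟩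
        refine ⟨i + i', j + j', by ring, ?_⟩
        rw [zpow_add, zpow_add, mul_assoc, ← mul_assoc (a ^ i'),
          ((hcm.zpow_zpow i' j).eq), mul_assoc, h', mul_one, h]
      neg_mem' := by
        rintro _ ⟨i, j, rfl, h⟩
        refine ⟨-i, -j, by ring, ?_⟩
        rw [zpow_neg, zpow_neg, ← mul_inv_rev, ← (hcm.zpow_zpow i j).eq, h, inv_one] }
  have hz : ∀ i j : ℤ, i + j = 0 → a ^ i * b ^ j = 1 → i = 0 := by
    intro i j hij h
    by_contra hi
    apply ho
    rw [isOfFinOrder_iff_zpow_eq_one]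
    refine ⟨i, hi, ?_⟩
    rw [(hcm.inv_right).mul_zpow, inv_zpow', ← h]
    congr 2
    omega
  obtain ⟨d, hd⟩ := Int.subgroup_cyclic R
  have hdm : d ∈ R := by rw [hd]; exact AddSubgroup.mem_closure_singleton_self d
  obtain ⟨m, n', hs, hmn⟩ := hdm
  have hl : ∀ l : ℤ, a ^ (l * m) * b ^ (l * n') = 1 := by
    intro l
    rw [mul_comm l m, mul_comm l n', zpow_mul, zpow_mul, ← (hcm.zpow_zpow m n').mul_zpow, hmn, one_zpow]
  refine ⟨m, -n', ?_, ?_, ?_⟩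
  · intro h
    obtain ⟨rfl, h2⟩ := Prod.mk.inj h
    have := hz 1 n' (by omega) hmn
    omega
  · intro h
    obtain ⟨rfl, h2⟩ := Prod.mk.inj h
    have := hz (-1) n' (by omega) hmn
    omega
  · intro i j
    constructor
    · intro h
      have : i + j ∈ R := ⟨i, j, rfl, h⟩
      rw [hd, AddSubgroup.mem_closure_singleton] at this
      obtain ⟨l, hl'⟩ := this
      rw [hs, smul_eq_mul] at hl'
      have h3 := hz (i - l * m) (j - l * n') (by linarith) (by
        rw [zpow_sub, zpow_sub]
        have e1 : b ^ (l * n') = (a ^ (l * m))⁻¹ := (inv_eq_of_mul_eq_one_right (hl l)).symm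
        rw [e1, inv_inv, (hcm.zpow_zpow (l*m) j).symm.eq, ← mul_assoc, inv_mul_cancel_right, h])
      exact ⟨l, by omega, by linarith⟩
    · rintro ⟨l, rfl, rfl⟩
      rw [← hl l]; congr 2; ring

lemma zp_eq (a : GroupLike K H) (i : ℤ) : zp a.val (inv' K H a.val) i = (a ^ i).val := by
  have h1 : inv' K H a.val = (a⁻¹).val := rfl
  have h2 : a ^ i = a ^ i.toNat * a⁻¹ ^ (-i).toNat := by
    rw [inv_pow, ← zpow_natCast, ← zpow_natCast, ← zpow_neg, ← zpow_add]
    congr 1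
    omega
  rw [h2, h1]
  rfl

end GroupPart
section LICPart

open Coalgebra

variable {K : Type} [Field K] {H : Type} [Ring H] [HopfAlgebra K H]

lemma tmul_mem_range {D : Submodule K H} {x y : H} (hx : x ∈ D) (hy : y ∈ D) :
    x ⊗ₜ[K] y ∈ LinearMap.range (TensorProduct.map D.subtype D.subtype) :=
  ⟨(⟨x, hx⟩ : D) ⊗ₜ (⟨y, hy⟩ : D), by simp⟩

lemma range_mono {D E : Submodule K H} (h : D ≤ E) :
    LinearMap.range (TensorProduct.map D.subtype D.subtype) ≤
      LinearMap.range (TensorProduct.map E.subtype E.subtype) := by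
  rintro _ ⟨t, rfl⟩
  induction t with
  | zero => simp
  | add x y hx hy => rw [map_add]; exact Submodule.add_mem _ hx hy
  | tmul x y => exact tmul_mem_range (h x.2) (h y.2)

lemma subcoalg_sup {D E : Submodule K H} (hD : IsSubcoalgebra K H D) (hE : IsSubcoalgebra K H E) :
    IsSubcoalgebra K H (D ⊔ E) := by
  intro x hx
  obtain ⟨y, hy, z, hz, rfl⟩ := Submodule.mem_sup.1 hx
  rw [map_add]
  exact Submodule.add_mem _ (range_mono le_sup_left (hD y hy)) (range_mono le_sup_right (hE z hz))

lemma subcoalg_span {u v z : H} (hu : IsGrouplike K H u) (hv : IsGrouplike K H v)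
    (hz : z ∈ skewPrim K H u v) : IsSubcoalgebra K H (Submodule.span K {u, v, z}) := by
  have mu : u ∈ Submodule.span K {u, v, z} := Submodule.subset_span (by simp)
  have mv : v ∈ Submodule.span K {u, v, z} := Submodule.subset_span (by simp)
  have mz : z ∈ Submodule.span K {u, v, z} := Submodule.subset_span (by simp)
  intro x hx
  induction hx using Submodule.span_induction with
  | zero => simp
  | add x y _ _ hx hy => rw [map_add]; exact Submodule.add_mem _ hx hy
  | smul c x _ hx => rw [map_smul]; exact Submodule.smul_mem _ _ hx
  | mem x hx =>
    rcases hx with rfl | rfl | rfl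
    · rw [hu.2]; exact tmul_mem_range mu mu
    · rw [hv.2]; exact tmul_mem_range mv mv
    · rw [(mem_skewPrim K H).1 hz]
      exact Submodule.add_mem _ (tmul_mem_range mu mz) (tmul_mem_range mz mv)

/-- convolution. -/
noncomputable def cnv (f e : H →ₗ[K] K) : H →ₗ[K] K :=
  LinearMap.mul' K K ∘ₗ TensorProduct.map f e ∘ₗ comul

lemma cnv_apply (f e : H →ₗ[K] K) (x : H) :
    cnv f e x = LinearMap.mul' K K (TensorProduct.map f e (comul x)) := rfl

lemma cnv_zero {f e : H →ₗ[K] K} {D : Submodule K H} (hD : IsSubcoalgebra K H D)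
    (h : (∀ x ∈ D, f x = 0) ∨ (∀ x ∈ D, e x = 0)) : ∀ x ∈ D, cnv f e x = 0 := by
  intro x hx
  rw [cnv_apply]
  obtain ⟨t, ht⟩ := hD x hx
  rw [← ht]
  clear ht
  induction t with
  | zero => simp
  | add x y hx hy => simp only [map_add, hx, hy, add_zero]
  | tmul x y =>
    rcases h with h | h
    · simp [h x.1 x.2]
    · simp [h y.1 y.2]

lemma cnv_gl {f e : H →ₗ[K] K} {k : H} (hk : IsGrouplike K H k) : cnv f e k = f k * e k := by
  rw [cnv_apply, hk.2]; simp

lemma exists_fun {D : Submodule K H} {k : H} (hk : k ∉ D) :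
    ∃ f : H →ₗ[K] K, (∀ x ∈ D, f x = 0) ∧ f k ≠ 0 := by
  obtain ⟨f, hf, h⟩ := Submodule.exists_le_ker_of_notMem hk
  exact ⟨f, fun x hx => h hx, hf⟩

lemma gl_sup {D E : Submodule K H} (hD : IsSubcoalgebra K H D) (hE : IsSubcoalgebra K H E)
    {k : H} (hk : IsGrouplike K H k) (h : k ∈ D ⊔ E) : k ∈ D ∨ k ∈ E := by
  by_contra! hne
  obtain ⟨f, hf, hfk⟩ := exists_fun hne.1
  obtain ⟨e, he, hek⟩ := exists_fun hne.2
  have : D ⊔ E ≤ LinearMap.ker (cnv f e) :=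
    sup_le (fun x hx => cnv_zero hD (.inl hf) x hx) (fun x hx => cnv_zero hE (.inr he) x hx)
  have := this h
  rw [LinearMap.mem_ker, cnv_gl hk] at this
  exact (mul_ne_zero hfk hek) this

lemma gl_span {u v z k : H} (hu : IsGrouplike K H u) (hv : IsGrouplike K H v)
    (hz : z ∈ skewPrim K H u v) (hk : IsGrouplike K H k) (h : k ∈ Submodule.span K {u, v, z}) :
    k = u ∨ k = v := by
  by_contra! hne
  have hn : k ∉ Submodule.span K {u, v} := by
    have := (linearIndep_groupLikeVal (R := K) (A := H)).notMem_span_image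
      (s := {⟨u, isGL_iff.1 hu⟩, ⟨v, isGL_iff.1 hv⟩}) (x := ⟨k, isGL_iff.1 hk⟩) (by
        simpa [GroupLike.ext_iff] using hne)
    simpa [Set.image_pair] using this
  obtain ⟨f, hf, hfk⟩ := exists_fun hn
  have fu := hf u (Submodule.subset_span (by simp))
  have fv := hf v (Submodule.subset_span (by simp))
  have : Submodule.span K {u, v, z} ≤ LinearMap.ker (cnv f f) := by
    rw [Submodule.span_le]
    rintro x (rfl | rfl | rfl)
    · simp [cnv_gl hu, fu]
    · simp [cnv_gl hv, fv]
    · simp [cnv_apply, (mem_skewPrim K H).1 hz, fu, fv]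
  have := this h
  rw [LinearMap.mem_ker, cnv_gl hk] at this
  exact (mul_ne_zero hfk hfk) this

lemma LinkedIn.symm' {D : Submodule K H} {g h : H} (l : LinkedIn K H D g h) :
    LinkedIn K H D h g := by
  obtain ⟨x, hx, h1, h2⟩ := l
  refine ⟨x, hx, h1.symm, ?_⟩
  rwa [← neg_sub, ← Set.neg_singleton, Submodule.span_neg]

lemma LinkedIn.mono' {D E : Submodule K H} (hDE : D ≤ E) {g h : H} (l : LinkedIn K H D g h) :
    LinkedIn K H E g h := by
  obtain ⟨x, hx, h1, h2⟩ := l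
  exact ⟨x, hDE hx, h1, h2⟩

lemma lic_step {B : Submodule K H} (hB : IsLIC1 K H B) {u v : GroupLike K H} (l : Lnk u v)
    (h : u.val ∈ B ∨ v.val ∈ B) : u.val ∈ B ∧ v.val ∈ B := by
  obtain ⟨z, hz, hz'⟩ := l
  have hu := isGL_val u
  have hv := isGL_val v
  set E := Submodule.span K {u.val, v.val, z} with hE
  have mu : u.val ∈ E := Submodule.subset_span (by simp)
  have mv : v.val ∈ E := Submodule.subset_span (by simp)
  have mz : z ∈ E := Submodule.subset_span (by simp)
  have hEs := subcoalg_span hu hv hz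
  have luv : LinkedIn K H (B ⊔ E) u.val v.val := ⟨z, Submodule.mem_sup_right mz, .inl hz, hz'⟩
  have hone : IsGrouplike K H (1 : H) := isGL_val 1
  have hBc : ∀ k, IsGrouplike K H k → k ∈ B → Relation.ReflTransGen (LinkedIn K H (B ⊔ E)) 1 k :=
    fun k hk hkB => Relation.ReflTransGen.mono
      (fun _ _ l => LinkedIn.mono' le_sup_left l) _ _ (hB.connected 1 k hone hB.one_mem hk hkB)
  have huv : Relation.ReflTransGen (LinkedIn K H (B ⊔ E)) 1 u.val ∧
      Relation.ReflTransGen (LinkedIn K H (B ⊔ E)) 1 v.val := by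
    rcases h with h | h
    · exact ⟨hBc _ hu h, (hBc _ hu h).tail luv⟩
    · exact ⟨(hBc _ hv h).tail luv.symm', hBc _ hv h⟩
  have hall : ∀ k, IsGrouplike K H k → k ∈ B ⊔ E →
      Relation.ReflTransGen (LinkedIn K H (B ⊔ E)) 1 k := by
    intro k hk hkm
    rcases gl_sup hB.subcoalg hEs hk hkm with h1 | h1
    · exact hBc k hk h1
    · rcases gl_span hu hv hz hk h1 with rfl | rfl
      · exact huv.1
      · exact huv.2
  have hsym : Std.Symm (LinkedIn K H (B ⊔ E)) := ⟨fun _ _ l => l.symm'⟩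
  have heq := hB.maximal (B ⊔ E) (subcoalg_sup hB.subcoalg hEs) (by
    intro g k hg hgm hk hkm
    exact (Relation.ReflTransGen.stdSymm.symm _ _ (hall g hg hgm)).trans (hall k hk hkm)) le_sup_left
  rw [← heq]
  exact ⟨Submodule.mem_sup_right mu, Submodule.mem_sup_right mv⟩

lemma tmul_eq_zero_left {V W : Type} [AddCommGroup V] [Module K V] [AddCommGroup W] [Module K W]
    {x : V} {w : W} (hx : x ≠ 0) (h : x ⊗ₜ[K] w = 0) : w = 0 := by
  obtain ⟨f, hf, -⟩ := Submodule.exists_le_ker_of_notMem (p := (⊥ : Submodule K V)) (v := x) (by simpa using hx)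
  have := congrArg (fun t => TensorProduct.lid K W (LinearMap.rTensor W f t)) h
  simpa [hf] using this

lemma gl_of_comul {h : H} (h0 : h ≠ 0) (hc : comul (R := K) h = h ⊗ₜ[K] h) : IsGrouplike K H h := by
  refine ⟨?_, hc⟩
  have h1 := Coalgebra.rTensor_counit_comul (R := K) h
  rw [hc, LinearMap.rTensor_tmul] at h1
  have h2 := congrArg (TensorProduct.lid K H) h1
  simp only [TensorProduct.lid_tmul, one_smul] at h2
  by_contra hne
  have : (counit (R := K) h - 1) • h = 0 := by rw [sub_smul, h2, one_smul, sub_self]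
  rcases smul_eq_zero.1 this with h3 | h3
  · exact hne (sub_eq_zero.1 h3)
  · exact h0 h3

lemma skew_right_gl {g h x : H} (hg : IsGrouplike K H g) (hx : x ∈ skewPrim K H g h)
    (hx' : x ∉ Submodule.span K {g - h}) : IsGrouplike K H h := by
  rw [mem_skewPrim] at hx
  have hx0 : x ≠ 0 := by rintro rfl; exact hx' (Submodule.zero_mem _)
  apply gl_of_comul
  · rintro rfl
    apply hx'
    have h1 := Coalgebra.lTensor_counit_comul (R := K) x
    have h2 := congrArg (TensorProduct.rid K H) h1
    simp [hx] at h2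
    rw [← h2]
    exact Submodule.mem_span_singleton.2 ⟨_, by rw [sub_zero]⟩
  · have h1 := Coalgebra.coassoc_apply (R := K) x
    simp only [hx, map_add, LinearMap.rTensor_tmul, LinearMap.lTensor_tmul, hg.2,
      TensorProduct.add_tmul, TensorProduct.tmul_add, TensorProduct.assoc_tmul] at h1
    rw [← add_assoc] at h1
    have h2 := add_left_cancel h1
    have h3 : x ⊗ₜ[K] (comul (R := K) h - h ⊗ₜ[K] h) = 0 := by
      rw [TensorProduct.tmul_sub, h2, sub_self]
    exact sub_eq_zero.1 (tmul_eq_zero_left hx0 h3)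

lemma skew_left_gl {g h x : H} (hg : IsGrouplike K H g) (hx : x ∈ skewPrim K H h g)
    (hx' : x ∉ Submodule.span K {h - g}) : IsGrouplike K H h := by
  rw [mem_skewPrim] at hx
  have hx0 : x ≠ 0 := by rintro rfl; exact hx' (Submodule.zero_mem _)
  apply gl_of_comul
  · rintro rfl
    apply hx'
    have h1 := Coalgebra.rTensor_counit_comul (R := K) x
    have h2 := congrArg (TensorProduct.lid K H) h1
    simp [hx] at h2
    rw [← h2]
    exact Submodule.mem_span_singleton.2 ⟨-counit (R := K) x, by simp⟩
  · have h1 := Coalgebra.coassoc_symm_apply (R := K) x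
    simp only [hx, map_add, LinearMap.rTensor_tmul, LinearMap.lTensor_tmul, hg.2,
      TensorProduct.add_tmul, TensorProduct.tmul_add, TensorProduct.assoc_symm_tmul] at h1
    rw [add_assoc] at h1
    have h2 := add_right_cancel h1
    have h3 : x ⊗ₜ[K] (comul (R := K) h - h ⊗ₜ[K] h) = 0 := by
      have := congrArg (TensorProduct.comm K _ _) h2
      simp only [TensorProduct.comm_tmul] at this
      rw [TensorProduct.tmul_sub, this, sub_self]
    exact sub_eq_zero.1 (tmul_eq_zero_left hx0 h3)

lemma linked_lnk {D : Submodule K H} {g : GroupLike K H} {h : H} (l : LinkedIn K H D g.val h) :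
    ∃ h' : GroupLike K H, h'.val = h ∧ (Lnk g h' ∨ Lnk h' g) := by
  obtain ⟨x, hx, h1 | h1, h2⟩ := l
  · exact ⟨⟨h, isGL_iff.1 (skew_right_gl (isGL_val g) h1 h2)⟩, rfl, .inl ⟨x, h1, h2⟩⟩
  · have h2' : x ∉ Submodule.span K {h - g.val} := by
      rwa [← neg_sub, ← Set.neg_singleton, Submodule.span_neg]
    exact ⟨⟨h, isGL_iff.1 (skew_left_gl (isGL_val g) h1 h2')⟩, rfl, .inr ⟨x, h1, h2'⟩⟩

end LICPart

theorem grouplikes_of_LIC_presentation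
    (K : Type) [Field K] [IsAlgClosed K]
    (H : Type) [Ring H] [HopfAlgebra K H]
    (hpointed : IsPointedCoalgebra K H) (hdiscrete : DiscreteCorepType K H)
    (B : Submodule K H) (hB : IsLIC1 K H B)
    (a b : H) (hab : a ≠ b) (ha : IsGrouplike K H a) (hb : IsGrouplike K H b)
    (x y : H)
    (hx : x ∈ skewPrim K H 1 a) (hx' : x ∉ Submodule.span K {(1 : H) - a})
    (hy : y ∈ skewPrim K H 1 b) (hy' : y ∉ Submodule.span K {(1 : H) - b}) :
    ∃ m n : ℤ, ((m, n) : ℤ × ℤ) ≠ (1, 1) ∧ ((m, n) : ℤ × ℤ) ≠ (-1, -1) ∧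
      grouplikeIn K H B a ∧ grouplikeIn K H B b ∧ a * b = b * a ∧
      a * inv' K H a = 1 ∧ inv' K H a * a = 1 ∧ b * inv' K H b = 1 ∧ inv' K H b * b = 1 ∧
      -- the only relations among `a` and `b` are those generated by `ab = ba, aᵐ = bⁿ`
      (∀ i j : ℤ, zp a (inv' K H a) i * zp b (inv' K H b) j = 1 ↔
          ∃ l : ℤ, i = l * m ∧ j = -(l * n)) ∧
      -- `G(B)` is generated by `a` and `b`
      (∀ g : H, grouplikeIn K H B g ↔
          ∃ i j : ℤ, g = zp a (inv' K H a) i * zp b (inv' K H b) j) := by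
  obtain ⟨a, rfl⟩ : ∃ a' : GroupLike K H, a'.val = a := ⟨⟨a, isGL_iff.1 ha⟩, rfl⟩
  obtain ⟨b, rfl⟩ : ∃ b' : GroupLike K H, b'.val = b := ⟨⟨b, isGL_iff.1 hb⟩, rfl⟩
  have hab' : a ≠ b := fun h => hab (congrArg _ h)
  have la : Lnk 1 a := ⟨x, hx, hx'⟩
  have lb : Lnk 1 b := ⟨y, hy, hy'⟩
  have hc := lnk_comm hdiscrete hab' la lb
  have hcm : Commute a b := hc
  obtain ⟨m, n, h1, h2, h3⟩ := rel_cyclic hab' hc (lnk_order hdiscrete hab' la lb)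
  have sa : ∀ g : GroupLike K H, g.val ∈ B ↔ (g * a).val ∈ B := fun g =>
    ⟨fun h => (lic_step hB (la.of_eq rfl) (.inl h)).2, fun h => (lic_step hB (la.of_eq rfl) (.inr h)).1⟩
  have sb : ∀ g : GroupLike K H, g.val ∈ B ↔ (g * b).val ∈ B := fun g =>
    ⟨fun h => (lic_step hB (lb.of_eq rfl) (.inl h)).2, fun h => (lic_step hB (lb.of_eq rfl) (.inr h)).1⟩
  have pow : ∀ c : GroupLike K H, (∀ g : GroupLike K H, g.val ∈ B ↔ (g * c).val ∈ B) →
      ∀ (i : ℤ) (g : GroupLike K H), g.val ∈ B → (g * c ^ i).val ∈ B := by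
    intro c hcB i
    induction i using Int.induction_on with
    | zero => intro g hg; simpa using hg
    | succ i ih =>
      intro g hg
      rw [zpow_add_one, ← mul_assoc]
      exact (hcB _).1 (ih g hg)
    | pred i ih =>
      intro g hg
      rw [hcB, mul_assoc, ← zpow_add_one, sub_add_cancel]
      exact ih g hg
  have one_mem : (1 : GroupLike K H).val ∈ B := hB.one_mem
  have mem : ∀ i j : ℤ, (a ^ i * b ^ j).val ∈ B := by
    intro i j
    refine pow b sb j _ ?_
    simpa using pow a sa i 1 one_mem
  have gen : ∀ g : H, Relation.ReflTransGen (LinkedIn K H B) 1 g →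
      ∃ i j : ℤ, g = (a ^ i * b ^ j).val := by
    intro g hg
    induction hg with
    | refl => exact ⟨0, 0, by simp⟩
    | tail _ l ih =>
      obtain ⟨i, j, rfl⟩ := ih
      obtain ⟨h', rfl, l' | l'⟩ := linked_lnk l
      · rcases lnk_three hdiscrete hab' la lb l'.one with e | e
        · refine ⟨i + 1, j, congrArg _ ?_⟩
          rw [inv_mul_eq_iff_eq_mul] at e
          rw [e, zpow_add_one, mul_assoc, mul_assoc, (hcm.zpow_right j).eq]
        · refine ⟨i, j + 1, congrArg _ ?_⟩
          rw [inv_mul_eq_iff_eq_mul] at e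
          rw [e, zpow_add_one, mul_assoc]
      · rcases lnk_three hdiscrete hab' la lb l'.one with e | e
        · refine ⟨i - 1, j, congrArg _ ?_⟩
          rw [inv_mul_eq_iff_eq_mul, ← mul_inv_eq_iff_eq_mul] at e
          rw [← e, zpow_sub_one, mul_assoc, mul_assoc, (hcm.inv_left.zpow_right j).eq]
        · refine ⟨i, j - 1, congrArg _ ?_⟩
          rw [inv_mul_eq_iff_eq_mul, ← mul_inv_eq_iff_eq_mul] at e
          rw [← e, zpow_sub_one, mul_assoc]
  refine ⟨m, n, h1, h2, ⟨ha, ?_⟩, ⟨hb, ?_⟩, congrArg GroupLike.val hc,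
    congrArg GroupLike.val (mul_inv_cancel a), congrArg GroupLike.val (inv_mul_cancel a),
    congrArg GroupLike.val (mul_inv_cancel b), congrArg GroupLike.val (inv_mul_cancel b), ?_, ?_⟩
  · simpa using mem 1 0
  · simpa using mem 0 1
  · intro i j
    rw [← h3 i j, zp_eq, zp_eq, ← GroupLike.val_mul, ← GroupLike.val_one (R := K), GroupLike.val_inj]
  · intro g
    simp only [zp_eq, ← GroupLike.val_mul]
    constructor
    · rintro ⟨hg, hgB⟩
      exact gen g (hB.connected 1 g (isGL_val 1) hB.one_mem hg hgB)
    · rintro ⟨i, j, rfl⟩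
      exact ⟨isGL_val _, mem i j⟩
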